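/- Fix an integer n ≥ 1 and a real q > 1, and set z_{ij} = w_i* w_j ∈ B(H_n) for 1 ≤ i, j ≤ n+1. For each index tuple consisting of r = (r_1,…,r_n) ∈ ℕⁿ, an integer m ≥ 0, and sequences i_1 ≥ i_2 ≥ ⋯ ≥ i_m and j_1 ≤ j_2 ≤ ⋯ ≤ j_m of elements of {1,…,n+1} whose value sets {i_1,…,i_m} and {j_1,…,j_m} are disjoint, define the operator P^{r,i,j,m} = z_{11}^{r_1} ⋯ z_{nn}^{r_n} z_{i_1 j_1} ⋯ z_{i_m j_m}. Then the family of all such operators P^{r,i,j,m}, indexed by these tuples, is linearly independent over ℂ. -/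

import Mathlib

noncomputable section

/-- The Hilbert space `H_n = ℓ²(ℕⁿ)`. -/
abbrev Hn (n : ℕ) : Type := lp (fun _ : (Fin n → ℕ) => ℂ) 2

/-- The standard orthonormal basis vectors `e_k`, `k ∈ ℕⁿ`, of `ℓ²(ℕⁿ)`. -/
def en {n : ℕ} (k : Fin n → ℕ) : Hn n := lp.single 2 k 1

/-- For an index `j` with `1 ≤ j+1 ≤ n` (so `w_{j+2} = γ^{⊗(n-1-j)} ⊗ α* ⊗ 1^{⊗j}`),
the (0-based) coordinate `n - 1 - j` at which the shift `α*` acts. -/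
def shiftIdx {n : ℕ} (j : Fin n) : Fin n := ⟨n - 1 - (j : ℕ), by have := j.isLt; omega⟩

/-- `IsWFamily q w` says that `w 0, …, w n` are the operators
`w_1, …, w_{n+1}` on `ℓ²(ℕⁿ)` from the paper (for the parameter `q`):
`w_1 e_k = q^{-(k_1+⋯+k_n)} e_k` and for `2 ≤ i ≤ n+1`,
`w_i e_k = q^{-(k_1+⋯+k_{n+1-i})} (1-q^{-2(k_{n+2-i}+1)})^{1/2} e_{k+δ_{n+2-i}}`.
These are the images of the generators `u_{n+1,i}` of `C(S_q^{2n+1})` (up to a circle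
factor) under the faithful representation `π_{n(n-1)⋯21}∘Δ^{n-1}`. -/
def IsWFamily (q : ℝ) {n : ℕ} (w : Fin (n + 1) → (Hn n →L[ℂ] Hn n)) : Prop :=
  (∀ k : Fin n → ℕ, w 0 (en k) = (q ^ (-(∑ m, (k m : ℤ)))) • en k) ∧
  (∀ (j : Fin n) (k : Fin n → ℕ),
    w j.succ (en k) =
      ((q ^ (-(∑ m ∈ Finset.univ.filter (fun m : Fin n => (m : ℕ) < n - 1 - (j : ℕ)), (k m : ℤ)))) *
          Real.sqrt (1 - q ^ (-2 * ((k (shiftIdx j) : ℤ) + 1)))) •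
        en (Function.update k (shiftIdx j) (k (shiftIdx j) + 1)))

/-- `B_n(q)`: the unital C*-subalgebra of bounded operators on `ℓ²(ℕⁿ)` generated by
`{w_i* w_j : 1 ≤ i, j ≤ n+1}` (the closed star-subalgebra they generate); this is the
concrete realization of the standard quantum projective space algebra `C(ℂP_q^n)`. -/
def projAlg {n : ℕ} (w : Fin (n + 1) → (Hn n →L[ℂ] Hn n)) :
    StarSubalgebra ℂ (Hn n →L[ℂ] Hn n) :=
  (StarAlgebra.adjoin ℂ
    {x : Hn n →L[ℂ] Hn n | ∃ i j : Fin (n + 1), x = star (w i) * w j}).topologicalClosure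


/-- Index data for the monomials `P^{r,i,j,m} = z_{11}^{r_1} ⋯ z_{nn}^{r_n} z_{i_1 j_1} ⋯
z_{i_m j_m}`: an exponent vector `r ∈ ℕⁿ`, a length `m ≥ 0`, a decreasing sequence
`i_1 ≥ ⋯ ≥ i_m` and an increasing sequence `j_1 ≤ ⋯ ≤ j_m` in `{1,…,n+1}` whose value
sets are disjoint. -/
def PIdx (n : ℕ) : Type :=
  Σ m : ℕ, (Fin n → ℕ) ×
    {p : (Fin m → Fin (n + 1)) × (Fin m → Fin (n + 1)) //
      Antitone p.1 ∧ Monotone p.2 ∧ Disjoint (Set.range p.1) (Set.range p.2)}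

/-- The monomial `P^{r,i,j,m} = z_{11}^{r_1} ⋯ z_{nn}^{r_n} z_{i_1 j_1} ⋯ z_{i_m j_m}`,
where `z_{ij} = w_i* w_j` (here indices `1,…,n+1` correspond to `Fin (n+1)`, with the
diagonal factors ranging over the first `n` indices). -/
def Pop {n : ℕ} (w : Fin (n + 1) → (Hn n →L[ℂ] Hn n)) (t : PIdx n) :
    Hn n →L[ℂ] Hn n :=
  (List.ofFn fun s : Fin n =>
      (star (w s.castSucc) * w s.castSucc) ^ (t.2.1 s)).prod *
  (List.ofFn fun s : Fin t.1 =>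
      star (w (t.2.2.1.1 s)) * w (t.2.2.1.2 s)).prod


theorem shiftIdx_shiftIdx {n : ℕ} (j : Fin n) : shiftIdx (shiftIdx j) = j := by
  apply Fin.ext; have := j.isLt; simp only [shiftIdx]; omega

theorem shiftIdx_inj {n : ℕ} {i j : Fin n} : shiftIdx i = shiftIdx j ↔ i = j :=
  ⟨fun h => by rw [← shiftIdx_shiftIdx i, h, shiftIdx_shiftIdx], fun h => by rw [h]⟩

/-- the shifted multi-index -/
def upIdx {n : ℕ} (a : Fin (n + 1)) (k : Fin n → ℕ) : Fin n → ℕ :=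
  Fin.cases k (fun j => Function.update k (shiftIdx j) (k (shiftIdx j) + 1)) a

/-- the coefficient -/
def coefW (q : ℝ) {n : ℕ} (a : Fin (n + 1)) (k : Fin n → ℕ) : ℝ :=
  Fin.cases (q ^ (-(∑ m, (k m : ℤ))))
    (fun j : Fin n => (q ^ (-(∑ m ∈ Finset.univ.filter
        (fun m : Fin n => (m : ℕ) < n - 1 - (j : ℕ)), (k m : ℤ)))) *
          Real.sqrt (1 - q ^ (-2 * ((k (shiftIdx j) : ℤ) + 1)))) a

theorem w_en {n : ℕ} {q : ℝ} {w : Fin (n + 1) → (Hn n →L[ℂ] Hn n)} (hw : IsWFamily q w)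
    (a : Fin (n + 1)) (k : Fin n → ℕ) :
    w a (en k) = ((coefW q a k : ℝ) : ℂ) • en (upIdx a k) := by
  rw [Complex.coe_smul]
  refine Fin.cases ?_ (fun j => ?_) a
  · exact hw.1 k
  · exact hw.2 j k

theorem one_sub_pos {q : ℝ} (hq : 1 < q) (x : ℕ) : 0 < 1 - q ^ (-2 * ((x : ℤ) + 1)) := by
  have : q ^ (-2 * ((x : ℤ) + 1)) < 1 := zpow_lt_one_of_neg₀ hq (by omega)
  linarith

theorem coefW_pos {n : ℕ} {q : ℝ} (hq : 1 < q) (a : Fin (n + 1)) (k : Fin n → ℕ) :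
    0 < coefW q a k := by
  have h0 : 0 < q := by linarith
  refine Fin.cases ?_ (fun j => ?_) a
  · simp only [coefW, Fin.cases_zero]; positivity
  · simp only [coefW, Fin.cases_succ]
    exact mul_pos (by positivity) (Real.sqrt_pos.2 (one_sub_pos hq _))

theorem upIdx_shift {n : ℕ} (a : Fin (n + 1)) (k : Fin n → ℕ) (j : Fin n) :
    ((upIdx a k (shiftIdx j) : ℕ) : ℤ) = k (shiftIdx j) + if a = j.succ then 1 else 0 := by
  refine Fin.cases ?_ (fun i => ?_) a
  · simp [upIdx, (Fin.succ_ne_zero j).symm]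
  · simp only [upIdx, Fin.cases_succ, Function.update_apply, shiftIdx_inj, Fin.succ_inj]
    by_cases h : i = j
    · subst h; simp
    · simp [h, Ne.symm h]

theorem ext_shift {n : ℕ} {k l : Fin n → ℕ}
    (h : ∀ j, ((k (shiftIdx j) : ℕ) : ℤ) = l (shiftIdx j)) : k = l := by
  funext m
  have := h (shiftIdx m)
  rw [shiftIdx_shiftIdx] at this
  exact_mod_cast this

theorem upIdx_inj {n : ℕ} (a : Fin (n + 1)) {k l : Fin n → ℕ} (h : upIdx a k = upIdx a l) :
    k = l := by
  apply ext_shift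
  intro j
  have h1 := upIdx_shift a k j
  have h2 := upIdx_shift a l j
  rw [h] at h1
  linarith

theorem en_apply {n : ℕ} (k l : Fin n → ℕ) : (en k : Hn n) l = if l = k then 1 else 0 := by
  classical
  split_ifs with h
  · subst h; exact lp.single_apply_self (E := fun _ : (Fin n → ℕ) => ℂ) 2 l (1 : ℂ)
  · exact lp.single_apply_ne (E := fun _ : (Fin n → ℕ) => ℂ) 2 k (1 : ℂ) h

theorem inner_en {n : ℕ} (k : Fin n → ℕ) (f : Hn n) : inner ℂ (en k) f = f k := by
  have := lp.inner_single_left (𝕜 := ℂ) (G := fun _ : (Fin n → ℕ) => ℂ) k (1 : ℂ) f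
  simpa [en] using this

theorem star_w_en {n : ℕ} {q : ℝ} {w : Fin (n + 1) → (Hn n →L[ℂ] Hn n)} (hw : IsWFamily q w)
    (a : Fin (n + 1)) (k : Fin n → ℕ) :
    star (w a) (en (upIdx a k)) = ((coefW q a k : ℝ) : ℂ) • en k := by
  apply lp.ext
  funext l
  rw [← inner_en l, ← inner_en l, ContinuousLinearMap.star_eq_adjoint,
    ContinuousLinearMap.adjoint_inner_right, w_en hw, inner_smul_left, inner_smul_right,
    inner_en, inner_en, en_apply, en_apply]
  by_cases h : l = k
  · subst h; simp
  · have : upIdx a l ≠ upIdx a k := fun h' => h (upIdx_inj a h')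
    simp [h, this]

/-- eventual weighted shift with nonzero weights -/
def Sh {n : ℕ} (T : Hn n →L[ℂ] Hn n) (N : Fin (n + 1) → ℤ) : Prop :=
  ∃ M : ℕ, ∀ k l : Fin n → ℕ, (∀ m, M ≤ k m) →
    (∀ j, (l (shiftIdx j) : ℤ) = k (shiftIdx j) + N j.succ) → ∃ c : ℂ, c ≠ 0 ∧ T (en k) = c • en l

theorem Sh.one {n : ℕ} : Sh (1 : Hn n →L[ℂ] Hn n) 0 := by
  refine ⟨0, fun k l _ h => ⟨1, one_ne_zero, ?_⟩⟩
  have : l = k := ext_shift (fun j => by simpa using h j)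
  simp [this]

theorem Sh.mul {n : ℕ} {T₁ T₂ : Hn n →L[ℂ] Hn n} {N₁ N₂ : Fin (n + 1) → ℤ}
    (h₁ : Sh T₁ N₁) (h₂ : Sh T₂ N₂) : Sh (T₁ * T₂) (N₁ + N₂) := by
  obtain ⟨M₁, h₁⟩ := h₁
  obtain ⟨M₂, h₂⟩ := h₂
  refine ⟨M₂ + M₁ + ∑ a, (N₂ a).natAbs, fun k l hk hl => ?_⟩
  have hB : ∀ a, (N₂ a).natAbs ≤ ∑ a, (N₂ a).natAbs := fun a =>
    Finset.single_le_sum (f := fun a => (N₂ a).natAbs) (fun _ _ => Nat.zero_le _)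
      (Finset.mem_univ a)
  let p : Fin n → ℕ := fun m => ((k m : ℤ) + N₂ (shiftIdx m).succ).toNat
  have hp : ∀ j, (p (shiftIdx j) : ℤ) = k (shiftIdx j) + N₂ j.succ := by
    intro j
    simp only [p, shiftIdx_shiftIdx]
    have := hB j.succ
    have := hk (shiftIdx j)
    omega
  have hp' : ∀ m, M₁ ≤ p m := by
    intro m
    have h1 := hp (shiftIdx m)
    rw [shiftIdx_shiftIdx] at h1
    have := hB (shiftIdx m).succ
    have := hk m
    omega
  obtain ⟨c₂, hc₂, e₂⟩ := h₂ k p (fun m => by have := hk m; omega) hp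
  obtain ⟨c₁, hc₁, e₁⟩ := h₁ p l hp' (fun j => by
    rw [hl j, hp j]; simp only [Pi.add_apply]; ring)
  refine ⟨c₂ * c₁, mul_ne_zero hc₂ hc₁, ?_⟩
  rw [mul_apply_eq_comp, e₂, map_smul, e₁, smul_smul]

theorem Sh.w {n : ℕ} {q : ℝ} (hq : 1 < q) {w : Fin (n + 1) → (Hn n →L[ℂ] Hn n)}
    (hw : IsWFamily q w) (a : Fin (n + 1)) : Sh (w a) (fun b => if a = b then 1 else 0) := by
  refine ⟨0, fun k l _ h => ⟨coefW q a k, ?_, ?_⟩⟩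
  · exact_mod_cast (coefW_pos hq a k).ne'
  · have : l = upIdx a k := ext_shift (fun j => by rw [h j, upIdx_shift])
    rw [this, w_en hw]

theorem Sh.star_w {n : ℕ} {q : ℝ} (hq : 1 < q) {w : Fin (n + 1) → (Hn n →L[ℂ] Hn n)}
    (hw : IsWFamily q w) (a : Fin (n + 1)) :
    Sh (star (w a)) (fun b => -(if a = b then 1 else 0)) := by
  refine ⟨0, fun k l _ h => ⟨coefW q a l, ?_, ?_⟩⟩
  · exact_mod_cast (coefW_pos hq a l).ne'
  · have : k = upIdx a l := ext_shift (fun j => by rw [upIdx_shift, h j]; ring)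
    rw [this, star_w_en hw]

/-- net counts -/
def netC {n m : ℕ} (i j : Fin m → Fin (n + 1)) (a : Fin (n + 1)) : ℤ :=
  ((List.ofFn j).count a : ℤ) - ((List.ofFn i).count a : ℤ)

theorem Sh.prod {n : ℕ} {q : ℝ} (hq : 1 < q) {w : Fin (n + 1) → (Hn n →L[ℂ] Hn n)}
    (hw : IsWFamily q w) : ∀ {m : ℕ} (i j : Fin m → Fin (n + 1)),
    Sh (List.ofFn fun s : Fin m => star (w (i s)) * w (j s)).prod (netC i j)
  | 0, i, j => by
    have : netC i j = 0 := by funext a; simp [netC]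
    rw [this]; simpa using Sh.one
  | m + 1, i, j => by
    have ih := Sh.prod hq hw (fun s => i s.succ) (fun s => j s.succ)
    have h := ((Sh.star_w hq hw (i 0)).mul (Sh.w hq hw (j 0))).mul ih
    rw [List.ofFn_succ, List.prod_cons]
    convert h using 1
    funext a
    simp only [netC, List.ofFn_succ, List.count_cons, Pi.add_apply, beq_iff_eq]
    push_cast
    ring

theorem sum_count {n m : ℕ} (f : Fin m → Fin (n + 1)) : ∑ a, (List.ofFn f).count a = m := by
  have := Multiset.sum_count_eq_card (s := Finset.univ) (m := (↑(List.ofFn f) : Multiset (Fin (n+1))))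
    (fun a _ => Finset.mem_univ a)
  simpa using this

theorem netC_sum {n m : ℕ} (i j : Fin m → Fin (n + 1)) : ∑ a, netC i j a = 0 := by
  simp only [netC, Finset.sum_sub_distrib]
  rw [← Nat.cast_sum, ← Nat.cast_sum, sum_count, sum_count, sub_self]

theorem count_disj {n m : ℕ} {i j : Fin m → Fin (n + 1)}
    (h : Disjoint (Set.range i) (Set.range j)) (a : Fin (n + 1)) :
    (List.ofFn i).count a = 0 ∨ (List.ofFn j).count a = 0 := by
  by_contra! hc
  rw [← Nat.pos_iff_ne_zero, ← Nat.pos_iff_ne_zero, List.count_pos_iff, List.count_pos_iff,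
    List.mem_ofFn, List.mem_ofFn] at hc
  exact Set.disjoint_left.1 h hc.1 hc.2

theorem idx_inj {n : ℕ} (t t' : PIdx n)
    (h : ∀ j : Fin n, netC t.2.2.1.1 t.2.2.1.2 j.succ = netC t'.2.2.1.1 t'.2.2.1.2 j.succ) :
    ∃ r, t = ⟨t'.1, r, t'.2.2⟩ := by
  obtain ⟨m, r, ⟨i, j⟩, hi, hj, hd⟩ := t
  obtain ⟨m', r', ⟨i', j'⟩, hi', hj', hd'⟩ := t'
  simp only at h hi hj hd hi' hj' hd'
  have hall : ∀ a, netC i j a = netC i' j' a := by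
    intro a
    refine Fin.cases ?_ h a
    have e1 := netC_sum i j
    have e2 := netC_sum i' j'
    rw [Fin.sum_univ_succ] at e1 e2
    rw [Finset.sum_congr rfl (fun x _ => h x)] at e1
    linarith
  have hc : ∀ a, (List.ofFn i).count a = (List.ofFn i').count a ∧
      (List.ofFn j).count a = (List.ofFn j').count a := by
    intro a
    have := hall a
    simp only [netC] at this
    have := count_disj hd a
    have := count_disj hd' a
    omega
  have hm : m = m' := by
    rw [← sum_count i, ← sum_count i']
    exact Finset.sum_congr rfl (fun a _ => (hc a).1)
  subst hm
  have ei : i = i' := List.ofFn_injective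
    ((List.perm_iff_count.2 fun a => (hc a).1).eq_of_pairwise' hi.sortedGE_ofFn.pairwise
      hi'.sortedGE_ofFn.pairwise)
  have ej : j = j' := List.ofFn_injective
    ((List.perm_iff_count.2 fun a => (hc a).2).eq_of_pairwise' hj.sortedLE_ofFn.pairwise
      hj'.sortedLE_ofFn.pairwise)
  subst ei ej
  exact ⟨r, rfl⟩

/-- eigenvalues of the diagonal part -/
theorem diag_en {n : ℕ} {q : ℝ} {w : Fin (n + 1) → (Hn n →L[ℂ] Hn n)}
    (hw : IsWFamily q w) (r : Fin n → ℕ) (k : Fin n → ℕ) :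
    (List.ofFn fun s : Fin n => (star (w s.castSucc) * w s.castSucc) ^ (r s)).prod (en k) =
      (∏ s : Fin n, (((coefW q s.castSucc k) ^ 2 : ℝ) : ℂ) ^ (r s)) • en k := by
  have h1 : ∀ a, (star (w a) * w a) (en k) = (((coefW q a k) ^ 2 : ℝ) : ℂ) • en k := by
    intro a
    rw [mul_apply_eq_comp, w_en hw, map_smul, star_w_en hw, smul_smul]
    push_cast; ring_nf
  have h2 : ∀ a (p : ℕ), ((star (w a) * w a) ^ p) (en k) =
      ((((coefW q a k) ^ 2 : ℝ) : ℂ) ^ p) • en k := by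
    intro a p
    induction p with
    | zero => simp
    | succ p ih => rw [pow_succ, mul_apply_eq_comp, h1, map_smul, ih, smul_smul,
        ← pow_succ' (((coefW q a k) ^ 2 : ℝ) : ℂ) p]
  rw [← List.prod_ofFn, List.ofFn_eq_map, List.ofFn_eq_map]
  induction List.finRange n with
  | nil => simp
  | cons s L ih =>
    rw [List.map_cons, List.map_cons, List.prod_cons, List.prod_cons,
      mul_apply_eq_comp, ih, map_smul, h2, smul_smul, mul_comm]

/-- the polynomials expressing the diagonal eigenvalues -/
def GP (q : ℝ) {n : ℕ} (a : Fin (n + 1)) : MvPolynomial (Fin n) ℂ :=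
  Fin.cases (∏ m, MvPolynomial.X m)
    (fun j : Fin n => (∏ m ∈ Finset.univ.filter
        (fun m : Fin n => (m : ℕ) < n - 1 - (j : ℕ)), MvPolynomial.X m) *
      (1 - MvPolynomial.C ((q ^ (-2 : ℤ) : ℝ) : ℂ) * MvPolynomial.X (shiftIdx j))) a

theorem GP_eval {n : ℕ} {q : ℝ} (hq : 1 < q) (a : Fin (n + 1)) (k : Fin n → ℕ) :
    MvPolynomial.eval (fun m => ((q ^ (-2 * (k m : ℤ)) : ℝ) : ℂ)) (GP q a) =
      (((coefW q a k) ^ 2 : ℝ) : ℂ) := by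
  have h0 : q ≠ 0 := by linarith
  have key : ∀ s : Finset (Fin n), (q ^ (-(∑ m ∈ s, (k m : ℤ)))) ^ 2
      = ∏ m ∈ s, q ^ (-2 * (k m : ℤ)) := by
    intro s
    induction s using Finset.induction_on with
    | empty => simp
    | insert a s ha ih =>
      rw [Finset.sum_insert ha, Finset.prod_insert ha, ← ih, neg_add, zpow_add₀ h0, mul_pow]
      congr 1
      rw [← zpow_natCast, ← zpow_mul]; congr 1; push_cast; ring
  refine Fin.cases ?_ (fun j => ?_) a
  · simp only [GP, coefW, Fin.cases_zero, key]
    simp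
  · simp only [GP, coefW, Fin.cases_succ, mul_pow, key]
    rw [Real.sq_sqrt (one_sub_pos hq _).le, mul_add, zpow_add₀ h0]
    simp
    left
    ring

/-- solving recursion -/
def recX (q : ℝ) (v : ℕ → ℝ) : ℕ → ℝ
  | 0 => v 0
  | a + 1 => v (a + 1) + q ^ (-2 : ℤ) * recX q v a

theorem recX_pos {q : ℝ} (hq : 1 < q) {v : ℕ → ℝ} (hv : ∀ a, 0 < v a) : ∀ a, 0 < recX q v a
  | 0 => hv 0
  | a + 1 => by
    have := recX_pos hq hv a
    have := hv (a + 1)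
    have : 0 < q := by linarith
    simp only [recX]; positivity

theorem prod_tele {n : ℕ} (x : ℕ → ℝ) (hx : ∀ a, 0 < x a) (h0 : x 0 = 1) (c : ℕ) (hc : c ≤ n) :
    ∏ m ∈ Finset.univ.filter (fun m : Fin n => (m : ℕ) < c), (x (m + 1) / x m) = x c := by
  have h1 : ∏ m ∈ Finset.range c, (x (m + 1) / x m) = x c := by
    clear hc
    induction c with
    | zero => simp [h0]
    | succ c ih => rw [Finset.prod_range_succ, ih, mul_div_cancel₀ _ (hx c).ne']
  rw [← h1, Finset.prod_filter, Fin.prod_univ_eq_prod_range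
    (fun m => if m < c then x (m + 1) / x m else 1) n, ← Finset.prod_filter]
  apply Finset.prod_congr _ (fun _ _ => rfl)
  ext m; simp; omega

theorem GP_solve {n : ℕ} {q : ℝ} (hq : 1 < q) (v : ℕ → ℝ) (hv : ∀ a, 0 < v a) :
    ∃ y : Fin n → ℂ, ∀ s : Fin n, MvPolynomial.eval y (GP q s.castSucc) = ((v s : ℝ) : ℂ) := by
  let x : ℕ → ℝ := fun c => if c = 0 then 1 else recX q v (n - c)
  have hx : ∀ a, 0 < x a := by
    intro a; simp only [x]; split_ifs
    · exact one_pos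
    · exact recX_pos hq hv _
  have h0 : x 0 = 1 := by simp [x]
  refine ⟨fun m => ((x (m + 1) / x m : ℝ) : ℂ), fun s => ?_⟩
  obtain ⟨s, hs⟩ := s
  cases s with
  | zero =>
    have e : (Fin.castSucc ⟨0, hs⟩ : Fin (n + 1)) = 0 := rfl
    have := prod_tele (n := n) x hx h0 n le_rfl
    rw [Finset.filter_true_of_mem (fun m _ => m.isLt)] at this
    rw [e]
    simp only [GP, Fin.cases_zero, map_prod, MvPolynomial.eval_X]
    rw [← Complex.ofReal_prod, this]
    have : n ≠ 0 := by omega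
    simp [x, this, recX]
  | succ j =>
    have e : (Fin.castSucc ⟨j + 1, hs⟩ : Fin (n + 1)) = Fin.succ ⟨j, by omega⟩ := rfl
    have := prod_tele (n := n) x hx h0 (n - 1 - j) (by omega)
    rw [e]
    simp only [GP, Fin.cases_succ, map_prod, MvPolynomial.eval_X, map_mul, map_sub, map_one,
      MvPolynomial.eval_C]
    rw [← Complex.ofReal_prod, this]
    simp only [shiftIdx]
    rw [← Complex.ofReal_one, ← Complex.ofReal_mul, ← Complex.ofReal_sub, ← Complex.ofReal_mul]
    congr 1
    have hne := (hx (n - 1 - j)).ne'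
    have e1 : x (n - 1 - j) = v (j + 1) + q ^ (-2 : ℤ) * recX q v j := by
      have h1 : n - 1 - j ≠ 0 := by omega
      have h2 : n - (n - 1 - j) = j + 1 := by omega
      simp only [x, h1, if_false, h2, recX]
    have e2 : x (n - 1 - j + 1) = recX q v j := by
      have h2 : n - (n - 1 - j + 1) = j := by omega
      simp [x, h2]
    have : x (n - 1 - j) * (1 - q ^ (-2 : ℤ) * (x (n - 1 - j + 1) / x (n - 1 - j))) =
      x (n - 1 - j) - q ^ (-2 : ℤ) * x (n - 1 - j + 1) := by
      generalize q ^ (-2 : ℤ) = u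
      field_simp
    rw [this, e2, e1]; ring

theorem poly_zero {n : ℕ} {q : ℝ} (hq : 1 < q) (M : ℕ) (p : MvPolynomial (Fin n) ℂ)
    (h : ∀ k : Fin n → ℕ, (∀ m, M ≤ k m) →
      MvPolynomial.eval (fun s => (((coefW q s.castSucc k) ^ 2 : ℝ) : ℂ)) p = 0) : p = 0 := by
  have hq0 : 0 < q := by linarith
  have hev : ∀ y : Fin n → ℂ, MvPolynomial.eval y
      (MvPolynomial.bind₁ (fun s : Fin n => GP q s.castSucc) p) =
      MvPolynomial.eval (fun s => MvPolynomial.eval y (GP q s.castSucc)) p := by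
    intro y
    simp only [← MvPolynomial.coe_aeval_eq_eval, RingHom.coe_coe, MvPolynomial.aeval_bind₁]
  have hQ : MvPolynomial.bind₁ (fun s : Fin n => GP q s.castSucc) p = 0 := by
    apply MvPolynomial.funext_set
      (fun _ => Set.range (fun k : ℕ => ((q ^ (-2 * ((M + k : ℕ) : ℤ)) : ℝ) : ℂ)))
    · intro _
      apply Set.infinite_range_of_injective
      intro a b hab
      have h1 := Complex.ofReal_injective hab
      have := zpow_right_injective₀ hq0 hq.ne' h1
      push_cast at this
      omega
    · intro y hy
      choose k hk using fun m => hy m (Set.mem_univ m)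
      have : y = fun m => ((q ^ (-2 * ((M + k m : ℕ) : ℤ)) : ℝ) : ℂ) := by
        funext m; exact (hk m).symm
      rw [hev, map_zero, ← h (fun m => M + k m) (fun m => Nat.le_add_right _ _), this]
      congr 2
      funext s
      exact GP_eval hq s.castSucc (fun m => M + k m)
  apply MvPolynomial.funext_set (fun _ => Set.range (fun k : ℕ => (((k : ℝ) + 1 : ℝ) : ℂ)))
  · intro _
    apply Set.infinite_range_of_injective
    intro a b hab
    have h1 := Complex.ofReal_injective hab
    simpa using h1
  · intro v hv
    choose k hk using fun m => hv m (Set.mem_univ m)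
    obtain ⟨y, hy⟩ := GP_solve (n := n) hq
      (fun a => if h : a < n then (k ⟨a, h⟩ : ℝ) + 1 else 1)
      (fun a => by split_ifs <;> positivity)
    have : v = fun s => MvPolynomial.eval y (GP q s.castSucc) := by
      funext s
      rw [hy s, ← hk s]
      simp
    rw [this, ← hev, hQ]; simp

/-- Fix `n ≥ 1` and `q > 1`, and let `z_{ij} = w_i* w_j` on `H_n = ℓ²(ℕⁿ)`.  The family of
all monomials `P^{r,i,j,m} = z_{11}^{r_1} ⋯ z_{nn}^{r_n} z_{i_1 j_1} ⋯ z_{i_m j_m}`, over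
`r ∈ ℕⁿ`, `m ≥ 0`, decreasing `i_1 ≥ ⋯ ≥ i_m`, increasing `j_1 ≤ ⋯ ≤ j_m` with disjoint
value sets in `{1,…,n+1}`, is linearly independent over `ℂ`. -/
theorem stmt_8 (n : ℕ) (hn : 1 ≤ n) (q : ℝ) (hq : 1 < q)
    (w : Fin (n + 1) → (Hn n →L[ℂ] Hn n)) (hw : IsWFamily q w) :
    LinearIndependent ℂ (Pop w) := by
  classical
  rw [linearIndependent_iff']
  intro s g hg t₀ ht₀
  let N : PIdx n → Fin (n + 1) → ℤ := fun t => netC t.2.2.1.1 t.2.2.1.2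
  let Z : PIdx n → (Hn n →L[ℂ] Hn n) := fun t =>
    (List.ofFn fun s : Fin t.1 => star (w (t.2.2.1.1 s)) * w (t.2.2.1.2 s)).prod
  have hZ : ∀ t, Sh (Z t) (N t) := fun t => Sh.prod hq hw _ _
  choose M hM using hZ
  let B : ℕ := ∑ t ∈ s, (M t + ∑ a, (N t a).natAbs)
  have hB : ∀ t ∈ s, M t + ∑ a, (N t a).natAbs ≤ B := fun t ht =>
    Finset.single_le_sum (f := fun t => M t + ∑ a, (N t a).natAbs)
      (fun _ _ => Nat.zero_le _) ht
  have hB' : ∀ t ∈ s, ∀ a, M t + (N t a).natAbs ≤ B := fun t ht a => by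
    have h1 := hB t ht
    have h2 := Finset.single_le_sum (f := fun a => (N t a).natAbs) (fun _ _ => Nat.zero_le _)
      (Finset.mem_univ a)
    omega
  let S := s.filter (fun t => ∀ j : Fin n, N t j.succ = N t₀ j.succ)
  let p : MvPolynomial (Fin n) ℂ :=
    ∑ t ∈ S, MvPolynomial.monomial (Finsupp.equivFunOnFinite.symm t.2.1) (g t)
  have hp : p = 0 := by
    apply poly_zero hq (B + B) p
    intro l hl
    -- the source index
    let k : Fin n → ℕ := fun m => ((l m : ℤ) - N t₀ (shiftIdx m).succ).toNat
    have hk : ∀ j, (l (shiftIdx j) : ℤ) = k (shiftIdx j) + N t₀ j.succ := by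
      intro j
      simp only [k, shiftIdx_shiftIdx]
      have := hB' t₀ ht₀ j.succ
      have := hl (shiftIdx j)
      omega
    have hkB : ∀ m, B ≤ k m := by
      intro m
      have h1 := hk (shiftIdx m)
      rw [shiftIdx_shiftIdx] at h1
      have := hB' t₀ ht₀ (shiftIdx m).succ
      have := hl m
      omega
    obtain ⟨c, hc, hcZ⟩ := hM t₀ k l (fun m => by
      have := hB t₀ ht₀; have := hkB m; omega) hk
    have happ := congrArg (fun T : Hn n →L[ℂ] Hn n => inner ℂ (en l) (T (en k))) hg
    simp only [_root_.sum_apply, inner_sum, _root_.smul_apply,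
      inner_smul_right, _root_.zero_apply, inner_zero_right] at happ
    have hin : ∀ t ∈ S, inner ℂ (en l) (Pop w t (en k)) =
        (∏ s : Fin n, (((coefW q s.castSucc l) ^ 2 : ℝ) : ℂ) ^ (t.2.1 s)) * c := by
      intro t ht
      obtain ⟨r, hr⟩ := idx_inj t t₀ (Finset.mem_filter.1 ht).2
      have hZt : Z t = Z t₀ := by rw [hr]
      have : Pop w t (en k) = (List.ofFn fun s : Fin n =>
        (star (w s.castSucc) * w s.castSucc) ^ (t.2.1 s)).prod (Z t (en k)) := rfl
      rw [this, hZt, hcZ, map_smul, diag_en hw, inner_smul_right, inner_smul_right, inner_en,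
        en_apply, if_pos rfl]
      ring
    have hout : ∀ t ∈ s, t ∉ S → g t * inner ℂ (en l) (Pop w t (en k)) = 0 := by
      intro t ht htS
      let l' : Fin n → ℕ := fun m => ((k m : ℤ) + N t (shiftIdx m).succ).toNat
      have hl' : ∀ j, (l' (shiftIdx j) : ℤ) = k (shiftIdx j) + N t j.succ := by
        intro j
        simp only [l', shiftIdx_shiftIdx]
        have := hB' t ht j.succ
        have := hkB (shiftIdx j)
        omega
      obtain ⟨c', -, hcZ'⟩ := hM t k l' (fun m => by
        have := hB t ht; have := hkB m; omega) hl'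
      have hne : l ≠ l' := by
        intro h
        apply htS
        refine Finset.mem_filter.2 ⟨ht, fun j => ?_⟩
        have h1 := hk j
        have h2 := hl' j
        rw [← h] at h2
        linarith
      have : Pop w t (en k) = (List.ofFn fun s : Fin n =>
        (star (w s.castSucc) * w s.castSucc) ^ (t.2.1 s)).prod (Z t (en k)) := rfl
      rw [this, hcZ', map_smul, diag_en hw, inner_smul_right, inner_smul_right, inner_en,
        en_apply, if_neg hne]
      ring
    rw [← Finset.sum_subset (Finset.filter_subset _ s) hout] at happ
    have h3 : MvPolynomial.eval (fun s => (((coefW q s.castSucc l) ^ 2 : ℝ) : ℂ)) p * c = 0 := by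
      rw [← happ, map_sum, Finset.sum_mul]
      refine Finset.sum_congr rfl fun t ht => ?_
      rw [hin t ht, MvPolynomial.eval_monomial, Finsupp.prod_fintype _ _ (fun _ => pow_zero _)]
      simp only [Finsupp.equivFunOnFinite_symm_apply_apply]
      ring
    exact (mul_eq_zero.1 h3).resolve_right hc
  have hcoef := congrArg (MvPolynomial.coeff (Finsupp.equivFunOnFinite.symm t₀.2.1)) hp
  simp only [p, MvPolynomial.coeff_sum, MvPolynomial.coeff_monomial, MvPolynomial.coeff_zero]
    at hcoef
  rw [Finset.sum_eq_single t₀] at hcoef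
  · simpa using hcoef
  · intro t ht hne
    rw [if_neg]
    intro h
    apply hne
    obtain ⟨r, hr⟩ := idx_inj t t₀ (Finset.mem_filter.1 ht).2
    have h' := Finsupp.equivFunOnFinite.symm.injective h
    rw [hr] at h' ⊢
    simp only at h'
    rw [h']
    rfl
  · intro h
    exact absurd (Finset.mem_filter.2 ⟨ht₀, fun _ => rfl⟩) h
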